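/- arXiv:1511.02475 — 3 statements merged into one kernel-verified Lean document; each statement's English description precedes it below -/
import Mathlib

section
/- Let G be a bridgeless graph in which every vertex has degree 2 or 3, and assume exactly one vertex has degree 2 (all other vertices have degree 3). Then G has a 2-factor (a spanning 2-regular subgraph). -/
open scoped Classical

/-- A finite undirected multigraph (possibly with loops and parallel edges),
given by a vertex type, an edge type, and an endpoints map. -/
structure Multigraph where
  V : Type
  E : Type
  [fintV : Fintype V]
  [fintE : Fintype E]
  [decV : DecidableEq V]
  [decE : DecidableEq E]
  ends : E → Sym2 V

namespace Multigraph

attribute [instance] Multigraph.fintV Multigraph.fintE Multigraph.decV Multigraph.decE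

variable (G : Multigraph)

/-- The number of times `v` occurs as an endpoint of `e` (2 for a loop at `v`). -/
def incCount (v : G.V) (e : G.E) : ℕ :=
  if G.ends e = Sym2.diag v then 2 else if v ∈ G.ends e then 1 else 0

/-- Degree of a vertex (a loop contributes 2). -/
def degree (v : G.V) : ℕ := ∑ e : G.E, G.incCount v e

/-- The set `∂_G(v)` of edges incident to `v`. -/
def star (v : G.V) : Finset G.E := Finset.univ.filter fun e => v ∈ G.ends e

/-- No loops. -/
def Loopless : Prop := ∀ e : G.E, ¬ (G.ends e).IsDiag

/-- A cubic graph: loopless and 3-regular (parallel edges allowed). -/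
def Cubic : Prop := G.Loopless ∧ ∀ v : G.V, G.degree v = 3

/-- A cubic pseudo-graph: 3-regular, loops and parallel edges allowed. -/
def CubicPseudo : Prop := ∀ v : G.V, G.degree v = 3

/-- A simple graph: no loops and no parallel edges. -/
def Simple : Prop := G.Loopless ∧ ∀ e e' : G.E, G.ends e = G.ends e' → e = e'

/-- Two edges are adjacent if they are distinct and share an endpoint. -/
def EdgeAdj (e e' : G.E) : Prop :=
  e ≠ e' ∧ ∃ v : G.V, v ∈ G.ends e ∧ v ∈ G.ends e'

/-- A matching: a set of pairwise non-adjacent edges. -/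
def IsMatching (M : Set G.E) : Prop :=
  ∀ e ∈ M, ∀ e' ∈ M, e ≠ e' → ¬ ∃ v : G.V, v ∈ G.ends e ∧ v ∈ G.ends e'

/-- A perfect matching: a matching covering every vertex. -/
def IsPerfectMatching (M : Set G.E) : Prop :=
  G.IsMatching M ∧ ∀ v : G.V, ∃ e ∈ M, v ∈ G.ends e

/-- Degree of `v` within the spanning subgraph with edge set `A`. -/
noncomputable def degIn (A : Set G.E) (v : G.V) : ℕ :=
  ∑ e : G.E, if e ∈ A then G.incCount v e else 0

/-- `A` is the edge set of a `k`-factor: a spanning `k`-regular subgraph. -/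
def IsKFactor (k : ℕ) (A : Set G.E) : Prop := ∀ v : G.V, G.degIn A v = k

/-- `A` is the edge set of an even subgraph. -/
def EvenSubgraph (A : Set G.E) : Prop := ∀ v : G.V, Even (G.degIn A v)

/-- Reachability using only edges from `A`. -/
def Reach (A : Set G.E) : G.V → G.V → Prop :=
  Relation.ReflTransGen fun a b => ∃ e ∈ A, G.ends e = s(a, b)

/-- Connectedness. -/
def Connected : Prop := ∀ u v : G.V, G.Reach Set.univ u v

/-- A bridge: an edge whose removal disconnects its endpoints. -/
def IsBridge (e : G.E) : Prop :=
  ∀ u w : G.V, G.ends e = s(u, w) → ¬ G.Reach {e' | e' ≠ e} u w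

/-- The chromatic index: least number of colors of a proper edge coloring. -/
noncomputable def chromaticIndex : ℕ :=
  sInf {n | ∃ c : G.E → Fin n, ∀ e e', G.EdgeAdj e e' → c e ≠ c e'}

/-- A triangle on distinct vertices `u, v, w` with edges `e₁, e₂, e₃`. -/
def IsTriangle (e₁ e₂ e₃ : G.E) (u v w : G.V) : Prop :=
  u ≠ v ∧ v ≠ w ∧ u ≠ w ∧
    G.ends e₁ = s(u, v) ∧ G.ends e₂ = s(v, w) ∧ G.ends e₃ = s(u, w)

/-- Triangle-freeness. -/
def TriangleFree : Prop :=
  ¬ ∃ (e₁ e₂ e₃ : G.E) (u v w : G.V), G.IsTriangle e₁ e₂ e₃ u v w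

/-- An isomorphism of multigraphs. -/
structure Iso (G H : Multigraph) where
  vEquiv : G.V ≃ H.V
  eEquiv : G.E ≃ H.E
  ends_map : ∀ e : G.E, H.ends (eEquiv e) = (G.ends e).map vEquiv

/-- `G` and `H` are isomorphic. -/
def IsIsomorphicTo (G H : Multigraph) : Prop := Nonempty (Iso G H)

/-- An `H`-coloring of `G`: `f(∂_G(x)) = ∂_H(y)` for every vertex `x` of `G`,
some vertex `y` of `H`. -/
def IsHColoring (G H : Multigraph) (f : G.E → H.E) : Prop :=
  ∀ x : G.V, ∃ y : H.V, (G.star x).image f = H.star y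

/-- The set `V(f)` of vertices of `G` satisfying the `H`-coloring condition under `f`. -/
def colVerts (G H : Multigraph) (f : G.E → H.E) : Set G.V :=
  {x : G.V | ∃ y : H.V, (G.star x).image f = H.star y}

/-- The incidence multiset of a vertex: each incident edge with its multiplicity
(a loop occurs twice). -/
noncomputable def incMultiset (v : G.V) : Multiset G.E :=
  ∑ e : G.E, (G.incCount v e) • ({e} : Multiset G.E)

end Multigraph

/-- The Petersen graph. -/
def Petersen : Multigraph where
  V := Fin 10
  E := {p : Sym2 (Fin 10) //
    p ∈ ({s(0,1), s(1,2), s(2,3), s(3,4), s(4,0),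
          s(0,5), s(1,6), s(2,7), s(3,8), s(4,9),
          s(5,7), s(7,9), s(9,6), s(6,8), s(8,5)} : Finset (Sym2 (Fin 10)))}
  ends := Subtype.val

/-- The Sylvester graph `S` on 10 vertices: a central vertex 0 joined by three
bridges to three end-blocks; each end-block is a 3-vertex multigraph whose two
non-root vertices are joined by a pair of parallel edges. -/
def SylvesterS : Multigraph where
  V := Fin 10
  E := Fin 15
  ends := ![s(0,1), s(1,2), s(1,3), s(2,3), s(2,3),
            s(0,4), s(4,5), s(4,6), s(5,6), s(5,6),
            s(0,7), s(7,8), s(7,9), s(8,9), s(8,9)]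

/-- The Sylvester simple graph `S₁₆` on 16 vertices: central vertex 0 joined by
bridges to three 5-vertex end-blocks with edges
(v1,v2),(v1,v3),(v1,v4),(v2,v3),(v2,v4),(v3,v5),(v4,v5). -/
def Sylvester16 : Multigraph where
  V := Fin 16
  E := {p : Sym2 (Fin 16) //
    p ∈ ({s(1,2), s(1,3), s(1,4), s(2,3), s(2,4), s(3,5), s(4,5), s(0,5),
          s(6,7), s(6,8), s(6,9), s(7,8), s(7,9), s(8,10), s(9,10), s(0,10),
          s(11,12), s(11,13), s(11,14), s(12,13), s(12,14), s(13,15), s(14,15),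
          s(0,15)} : Finset (Sym2 (Fin 16)))}
  ends := Subtype.val

/-- The graph `S'` on 10 vertices: two 5-vertex blocks, each consisting of a
triangle v1v2v3 together with edges (v1,v4),(v2,v4),(v3,v5),(v4,v5), joined by
a bridge between the two degree-2 vertices. -/
def Sprime : Multigraph where
  V := Fin 10
  E := {p : Sym2 (Fin 10) //
    p ∈ ({s(0,1), s(0,2), s(1,2), s(0,3), s(1,3), s(2,4), s(3,4),
          s(5,6), s(5,7), s(6,7), s(5,8), s(6,8), s(7,9), s(8,9),
          s(4,9)} : Finset (Sym2 (Fin 10)))}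
  ends := Subtype.val

/-- The Sylvester pseudo-graph `S₄` on 4 vertices: a central vertex 0 joined to
vertices 1, 2, 3 (edges `a = 0`, `b = 1`, `c = 2`), each of which carries a loop
(`a' = 3`, `b' = 4`, `c' = 5`). -/
def S4 : Multigraph where
  V := Fin 4
  E := Fin 6
  ends := ![s(0,1), s(0,2), s(0,3), s(1,1), s(2,2), s(3,3)]

/-!
Apply Tutte's theorem to the subgraph `H` induced by the vertices of odd degree. If deleting a set
`u` from `H` leaves `q` odd components, then each of them is left by an odd number of edges of `G`,
hence by at least three since `G` is bridgeless. These edges end in `u` or in a vertex of degree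
two, so with at most two vertices of degree two `3 * q ≤ 3 * |u| + 4`, that is `q ≤ |u| + 1`. By the
handshake lemma `H` has even order, so `q` and `|u|` have the same parity and `q ≤ |u|`. Hence `H`
has a perfect matching, and the complement of that matching in `G` is a 2-factor.
-/

lemma exists_isPerfectMatching_of_forall_ncard_oddComponents_le {V : Type*} [Finite V]
    (H : SimpleGraph V) (hV : Even (Nat.card V))
    (h : ∀ u : Set V, ((⊤ : H.Subgraph).deleteVerts u).coe.oddComponents.ncard ≤ u.ncard + 1) :
    ∃ M : H.Subgraph, M.IsPerfectMatching := by
  refine SimpleGraph.tutte.mpr fun u hu => ?_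
  have hq : u.ncard + 1 = ((⊤ : H.Subgraph).deleteVerts u).coe.oddComponents.ncard :=
    le_antisymm hu (h u)
  have hcard : ((⊤ : H.Subgraph).deleteVerts u).verts.ncard + u.ncard = Nat.card V := by
    rw [SimpleGraph.Subgraph.deleteVerts_verts, SimpleGraph.Subgraph.verts_top,
      Set.ncard_sdiff_add_ncard_of_subset (Set.subset_univ u), Set.ncard_univ]
  have hparity := ((⊤ : H.Subgraph).deleteVerts u).coe.odd_ncard_oddComponents
  rw [Nat.card_coe_set_eq, ← hq] at hparity
  grind

namespace Multigraph

variable {G : Multigraph}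

lemma incCount_of_ends_eq {e : G.E} {a b : G.V} (he : G.ends e = s(a, b)) (v : G.V) :
    G.incCount v e = (if v = a then 1 else 0) + if v = b then 1 else 0 := by
  simp only [incCount, he, Sym2.diag, Sym2.eq_iff, Sym2.mem_iff]
  grind

lemma incCount_eq_zero {v : G.V} {e : G.E} (h : v ∉ G.ends e) : G.incCount v e = 0 := by
  have hne : G.ends e ≠ Sym2.diag v := fun he => h (he ▸ Sym2.mem_mk_left v v)
  simp [incCount, h, hne]

lemma card_star_le_degree (v : G.V) : (G.star v).card ≤ G.degree v := by
  rw [star, Finset.card_filter, degree]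
  refine Finset.sum_le_sum fun e _ => ?_
  rw [incCount]
  grind

lemma degIn_add_degIn_compl (A : Set G.E) (v : G.V) :
    G.degIn A v + G.degIn Aᶜ v = G.degree v := by
  rw [degIn, degIn, degree, ← Finset.sum_add_distrib]
  refine Finset.sum_congr rfl fun e _ => ?_
  by_cases h : e ∈ A <;> simp [h]

section EdgeCut

variable {S : Finset G.V} {e : G.E}

variable (G) in
/-- The edge cut `∂_G(S)`: the edges joining `S` to its complement. -/
noncomputable def edgeCut (S : Finset G.V) : Finset G.E :=
  {e | ∃ v ∈ S, ∃ w ∉ S, G.ends e = s(v, w)}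

lemma mem_edgeCut : e ∈ G.edgeCut S ↔ ∃ v ∈ S, ∃ w ∉ S, G.ends e = s(v, w) := by
  simp [edgeCut]

lemma mem_edgeCut_of_ends_eq {a b : G.V} (he : G.ends e = s(a, b)) :
    e ∈ G.edgeCut S ↔ ¬(a ∈ S ↔ b ∈ S) := by
  simp only [mem_edgeCut, he, Sym2.eq_iff]
  grind

lemma sum_degree_modEq_card_edgeCut (S : Finset G.V) :
    ∑ v ∈ S, G.degree v ≡ (G.edgeCut S).card [MOD 2] := by
  simp only [degree]
  rw [Finset.sum_comm, ← Finset.filter_univ_mem (G.edgeCut S), Finset.card_filter]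
  refine Nat.ModEq.sum fun e _ => ?_
  obtain ⟨a, b, he⟩ := Sym2.exists.mp ⟨G.ends e, rfl⟩
  have hcount : ∑ v ∈ S, G.incCount v e = (if a ∈ S then 1 else 0) + if b ∈ S then 1 else 0 := by
    simp [incCount_of_ends_eq he, Finset.sum_add_distrib]
  rw [hcount, if_congr (mem_edgeCut_of_ends_eq he) rfl rfl]
  by_cases ha : a ∈ S <;> by_cases hb : b ∈ S <;> simp [ha, hb, Nat.ModEq]

variable (G) in
lemma even_sum_degree : Even (∑ v, G.degree v) := by
  have hcut : G.edgeCut Finset.univ = ∅ := by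
    ext e
    simp [mem_edgeCut]
  simpa [hcut, Nat.ModEq, Nat.even_iff] using sum_degree_modEq_card_edgeCut (G := G) Finset.univ

lemma Reach.mem_iff_mem {A : Set G.E} {a b : G.V} (hA : ∀ e ∈ A, e ∉ G.edgeCut S)
    (h : G.Reach A a b) : a ∈ S ↔ b ∈ S := by
  induction h with
  | refl => rfl
  | tail _ hstep ih =>
    obtain ⟨e, heA, he⟩ := hstep
    exact ih.trans (not_not.mp ((mem_edgeCut_of_ends_eq he).not.mp (hA e heA)))

lemma isBridge_of_edgeCut_eq_singleton (h : G.edgeCut S = {e}) : G.IsBridge e := by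
  intro u w he hreach
  have hcut : e ∈ G.edgeCut S := by simp [h]
  exact (mem_edgeCut_of_ends_eq he).mp hcut (Reach.mem_iff_mem (by simp [h]) hreach)

lemma three_le_card_edgeCut (hbr : ∀ e, ¬ G.IsBridge e) (hS : Odd (∑ v ∈ S, G.degree v)) :
    3 ≤ (G.edgeCut S).card := by
  have hparity := sum_degree_modEq_card_edgeCut S
  rw [Nat.ModEq, Nat.odd_iff.mp hS] at hparity
  have hne : (G.edgeCut S).card ≠ 1 := fun h => by
    obtain ⟨e, he⟩ := Finset.card_eq_one.mp h
    exact hbr e (isBridge_of_edgeCut_eq_singleton he)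
  grind

lemma sum_card_edgeCut_le_sum_degree {ι : Type*} {I : Finset ι} {S : ι → Finset G.V}
    {T : Finset G.V} (hS : (I : Set ι).PairwiseDisjoint S) (hST : ∀ i ∈ I, Disjoint (S i) T)
    (hcut : ∀ i ∈ I, ∀ e ∈ G.edgeCut (S i), ∃ t ∈ T, t ∈ G.ends e) :
    ∑ i ∈ I, (G.edgeCut (S i)).card ≤ ∑ t ∈ T, G.degree t := by
  have hdisj : (I : Set ι).PairwiseDisjoint fun i => G.edgeCut (S i) := by
    intro i hi j hj hij
    refine Finset.disjoint_left.mpr fun e hei hej => ?_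
    obtain ⟨v, hv, w, -, he⟩ := mem_edgeCut.mp hei
    obtain ⟨v', hv', w', -, he'⟩ := mem_edgeCut.mp hej
    obtain ⟨t, ht, hte⟩ := hcut i hi e hei
    have hvv' : v ≠ v' := Finset.disjoint_iff_ne.mp (hS hi hj hij) v hv v' hv'
    have htv : v ≠ t := Finset.disjoint_iff_ne.mp (hST i hi) v hv t ht
    have htv' : v' ≠ t := Finset.disjoint_iff_ne.mp (hST j hj) v' hv' t ht
    grind
  calc ∑ i ∈ I, (G.edgeCut (S i)).card
      = (I.biUnion fun i => G.edgeCut (S i)).card := (Finset.card_biUnion hdisj).symm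
    _ ≤ (T.biUnion G.star).card := by
        refine Finset.card_le_card (Finset.biUnion_subset.mpr fun i hi e he => ?_)
        simpa [star] using hcut i hi e he
    _ ≤ ∑ t ∈ T, (G.star t).card := Finset.card_biUnion_le
    _ ≤ ∑ t ∈ T, G.degree t := Finset.sum_le_sum fun t _ => card_star_le_degree t

end EdgeCut

section Underlying

variable (G) in
/-- The underlying simple graph: loops are dropped and parallel edges identified. -/
def underlying : SimpleGraph G.V := SimpleGraph.fromEdgeSet (Set.range G.ends)

variable {V : Type*} {K : SimpleGraph V}

lemma exists_notMem_range_of_mem_edgeCut (f : K ↪g G.underlying) (c : K.ConnectedComponent)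
    {e : G.E} (he : e ∈ G.edgeCut (f '' c.supp).toFinset) : ∃ t ∉ Set.range f, t ∈ G.ends e := by
  obtain ⟨v, hv, w, hw, hvw⟩ := mem_edgeCut.mp he
  rw [Set.mem_toFinset] at hv hw
  refine ⟨w, ?_, by simp [hvw]⟩
  rintro ⟨l, rfl⟩
  obtain ⟨k, hk, rfl⟩ := hv
  have hkl : K.Adj k l := f.map_adj_iff.mp <| (SimpleGraph.fromEdgeSet_adj _).mpr
    ⟨⟨e, hvw⟩, fun h => hw ⟨k, hk, h⟩⟩
  exact hw ⟨l, (c.mem_supp_congr_adj hkl).mp hk, rfl⟩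

lemma odd_sum_degree_image_supp (f : K ↪g G.underlying) (hf : ∀ k, Odd (G.degree (f k)))
    {c : K.ConnectedComponent} (hc : c ∈ K.oddComponents) :
    Odd (∑ v ∈ (f '' c.supp).toFinset, G.degree v) := by
  rw [Finset.odd_sum_iff_odd_card_odd, Finset.filter_true_of_mem (by simp [hf]),
    ← Set.ncard_eq_toFinset_card', Set.ncard_image_of_injective _ f.injective]
  exact hc

lemma three_mul_ncard_oddComponents_le (hbr : ∀ e, ¬ G.IsBridge e) (f : K ↪g G.underlying)
    (hf : ∀ k, Odd (G.degree (f k))) {T : Finset G.V} (hT : (T : Set G.V) = (Set.range f)ᶜ) :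
    3 * K.oddComponents.ncard ≤ ∑ t ∈ T, G.degree t := by
  have : Finite V := Finite.of_injective f f.injective
  have : Fintype K.ConnectedComponent := Fintype.ofFinite _
  calc 3 * K.oddComponents.ncard
      = ∑ _c ∈ K.oddComponents.toFinset, 3 := by
        rw [Finset.sum_const, Set.ncard_eq_toFinset_card', smul_eq_mul, mul_comm]
    _ ≤ ∑ c ∈ K.oddComponents.toFinset, (G.edgeCut (f '' c.supp).toFinset).card :=
        Finset.sum_le_sum fun c hc => three_le_card_edgeCut hbr <|
          odd_sum_degree_image_supp f hf (Set.mem_toFinset.mp hc)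
    _ ≤ ∑ t ∈ T, G.degree t := by
        refine sum_card_edgeCut_le_sum_degree (fun c _ d _ hcd => ?_) (fun c _ => ?_)
          fun c _ e he => ?_
        · rw [Function.onFun, Set.disjoint_toFinset, Set.disjoint_image_iff f.injective]
          exact K.pairwise_disjoint_supp_connectedComponent hcd
        · rw [← Finset.disjoint_coe, Set.coe_toFinset, hT, Set.disjoint_compl_right_iff_subset]
          exact Set.image_subset_range f c.supp
        · obtain ⟨t, ht, hte⟩ := exists_notMem_range_of_mem_edgeCut f c he
          exact ⟨t, Finset.mem_coe.mp (hT ▸ ht), hte⟩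

lemma exists_degIn_eq_indicator_verts {M : G.underlying.Subgraph} (hM : M.IsMatching) :
    ∃ B : Set G.E, ∀ v, G.degIn B v = M.verts.indicator 1 v := by
  have hsurj : Set.SurjOn G.ends Set.univ M.edgeSet := fun p hp => by
    simpa using (SimpleGraph.edgeSet_fromEdgeSet _ ▸ M.edgeSet_subset hp).1
  obtain ⟨B, -, hB⟩ := hsurj.exists_bijOn_subset
  refine ⟨B, fun v => ?_⟩
  by_cases hv : v ∈ M.verts
  · obtain ⟨w, hvw, hw⟩ := hM hv
    obtain ⟨e₀, he₀B, he₀⟩ := hB.surjOn (show s(v, w) ∈ M.edgeSet from hvw)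
    rw [Set.indicator_of_mem hv, degIn, Finset.sum_eq_single e₀]
    · simp [he₀B, incCount_of_ends_eq he₀, hvw.ne]
    · intro e _ hne
      split_ifs with heB
      · refine incCount_eq_zero fun hve => hne (hB.injOn heB he₀B ?_)
        obtain ⟨w', he⟩ := hve
        have hvw' : M.Adj v w' := by simpa [he] using hB.mapsTo heB
        rw [he, he₀, hw w' hvw']
      · rfl
    · simp
  · rw [Set.indicator_of_notMem hv]
    refine Finset.sum_eq_zero fun e _ => ?_
    split_ifs with heB
    · exact incCount_eq_zero fun hve => hv (M.mem_verts_of_mem_edge (hB.mapsTo heB) hve)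
    · rfl

end Underlying

lemma three_mul_ncard_oddComponents_deleteVerts_induce_le (hbr : ∀ e, ¬ G.IsBridge e)
    {W : Finset G.V} (hodd : ∀ v ∈ W, Odd (G.degree v)) (hle : ∀ v ∈ W, G.degree v ≤ 3)
    (u : Set (W : Set G.V)) :
    3 * ((⊤ : (G.underlying.induce W).Subgraph).deleteVerts u).coe.oddComponents.ncard ≤
      3 * u.ncard + ∑ v ∈ Wᶜ, G.degree v := by
  let f : ((⊤ : (G.underlying.induce W).Subgraph).deleteVerts u).coe ↪g G.underlying :=
    { toFun v := v.1.1
      inj' := Subtype.val_injective.comp Subtype.val_injective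
      map_rel_iff' {v w} := by simp [v.2.2, w.2.2] }
  have hrange : (((Subtype.val '' u).toFinset ∪ Wᶜ : Finset G.V) : Set G.V) = (Set.range f)ᶜ := by
    ext v
    by_cases hv : v ∈ W <;> simp [f, hv]
  have hdisj : Disjoint (Subtype.val '' u).toFinset Wᶜ := by
    rw [← Finset.disjoint_coe, Finset.coe_compl, Set.disjoint_compl_right_iff_subset,
      Set.coe_toFinset]
    exact Subtype.coe_image_subset _ u
  have hu : ∑ v ∈ (Subtype.val '' u).toFinset, G.degree v ≤ 3 * u.ncard := by
    rw [← Set.ncard_image_of_injective u Subtype.val_injective, Set.ncard_eq_toFinset_card',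
      mul_comm]
    refine Finset.sum_le_card_nsmul _ _ _ fun v hv => ?_
    obtain ⟨k, -, rfl⟩ := Set.mem_toFinset.mp hv
    exact hle k k.2
  calc 3 * ((⊤ : (G.underlying.induce W).Subgraph).deleteVerts u).coe.oddComponents.ncard
      ≤ ∑ v ∈ (Subtype.val '' u).toFinset ∪ Wᶜ, G.degree v :=
        three_mul_ncard_oddComponents_le hbr f (fun k => hodd _ k.1.2) hrange
    _ = ∑ v ∈ (Subtype.val '' u).toFinset, G.degree v + ∑ v ∈ Wᶜ, G.degree v :=
        Finset.sum_union hdisj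
    _ ≤ 3 * u.ncard + ∑ v ∈ Wᶜ, G.degree v := by gcongr

variable (G) in
lemma even_card_filter_odd_degree : Even ({v | Odd (G.degree v)} : Finset G.V).card := by
  rw [← Nat.not_odd_iff_even, ← Finset.odd_sum_iff_odd_card_odd, Nat.not_odd_iff_even]
  exact G.even_sum_degree

lemma exists_isMatching_verts_eq_setOf_odd_degree (hbr : ∀ e, ¬ G.IsBridge e)
    (hodd : ∀ v, Odd (G.degree v) → G.degree v ≤ 3)
    (heven : ∑ v with Even (G.degree v), G.degree v < 6) :
    ∃ M : G.underlying.Subgraph, M.IsMatching ∧ M.verts = {v | Odd (G.degree v)} := by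
  let W : Finset G.V := {v | Odd (G.degree v)}
  have hcompl : Wᶜ = ({v | Even (G.degree v)} : Finset G.V) := by
    simp [W, Finset.compl_filter]
  have hcard : Even (Nat.card (W : Set G.V)) := by
    simpa using G.even_card_filter_odd_degree
  obtain ⟨M, hM, hspan⟩ := exists_isPerfectMatching_of_forall_ncard_oddComponents_le
      (G.underlying.induce W) hcard fun u => by
    have hq := three_mul_ncard_oddComponents_deleteVerts_induce_le hbr (W := W) (by simp [W])
      (by simpa [W] using hodd) u
    rw [hcompl] at hq
    lia
  let f : G.underlying.induce W ↪g G.underlying := SimpleGraph.Embedding.induce _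
  refine ⟨M.map f.toHom, hM.map _ f.injective, ?_⟩
  rw [SimpleGraph.Subgraph.map_verts, hspan.verts_eq_univ, Set.image_univ]
  exact Subtype.range_val.trans (Finset.coe_filter_univ _)

end Multigraph

theorem bridgeless_one_degree_two_has_two_factor_general (G : Multigraph)
    (hbr : ∀ e : G.E, ¬ G.IsBridge e) (hdeg : ∀ v : G.V, G.degree v = 2 ∨ G.degree v = 3)
    (htwo : {v : G.V | G.degree v = 2}.ncard ≤ 2) :
    ∃ A : Set G.E, G.IsKFactor 2 A := by
  have heven (v : G.V) : Even (G.degree v) ↔ G.degree v = 2 := by grind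
  have hsum : ∑ v with Even (G.degree v), G.degree v < 6 := by
    rw [Finset.sum_congr rfl fun v hv => (heven v).mp (Finset.mem_filter.mp hv).2,
      Finset.sum_const, smul_eq_mul, Finset.filter_congr fun v _ => heven v]
    rw [Set.ncard_eq_toFinset_card', Set.toFinset_ofPred] at htwo
    lia
  obtain ⟨M, hM, hverts⟩ := Multigraph.exists_isMatching_verts_eq_setOf_odd_degree hbr
    (fun v _ => by grind) hsum
  obtain ⟨B, hB⟩ := Multigraph.exists_degIn_eq_indicator_verts hM
  refine ⟨Bᶜ, fun v => ?_⟩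
  have hsplit := Multigraph.degIn_add_degIn_compl B v
  simp only [hB, hverts, Set.indicator_apply, Set.mem_ofPred_eq, Pi.one_apply] at hsplit
  grind

/-- A bridgeless graph with all degrees 2 or 3 and exactly one
vertex of degree 2 has a 2-factor. -/
theorem bridgeless_one_degree_two_has_two_factor (G : Multigraph)
    (hl : G.Loopless) (hbr : ∀ e : G.E, ¬ G.IsBridge e)
    (hdeg : ∀ v : G.V, G.degree v = 2 ∨ G.degree v = 3)
    (hone : ∃! v : G.V, G.degree v = 2) :
    ∃ A : Set G.E, G.IsKFactor 2 A :=
  bridgeless_one_degree_two_has_two_factor_general G hbr hdeg <|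
    (Set.ncard_le_one_iff_subsingleton.mpr fun _ hv _ hw => hone.unique hv hw).trans one_le_two
end

section
/- Let G be a simple cubic graph with no perfect matching and at most 16 vertices. Then G is isomorphic to the Sylvester graph S_16 on 16 vertices. -/
open scoped Classical

/-!
By Tutte's theorem and parity, a cubic graph without a perfect matching has a vertex set `u` such
that at least `|u| + 2` components of `G - u` have odd order. Parity makes the number of edges
joining each of these components to `u` odd, and there are at most `3|u|` such edges in total, so at
least three of the components send a single edge to `u`. Inside such a component the degrees add up
to `3n - 1`, which forces its order `n` to be at least five. With at most `16` vertices this leaves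
`|u| = 1` and three components of five vertices, each joined to the vertex of `u` by a single edge;
3-regularity determines these components uniquely, and together with `u` they form `S₁₆`.
-/

section Blocks

open Finset SimpleGraph
open scoped Function

variable {V : Type*} {H : SimpleGraph V} {S u : Finset V} {c : V} {d : ℕ}

/-- `S` avoids `u` and every edge leaving `S` ends in `u`; equivalently, `S` is a union of
connected components of `H - u`. -/
def IsSeparatedBy (H : SimpleGraph V) (S u : Finset V) : Prop :=
  Disjoint S u ∧ ∀ ⦃v⦄, v ∈ S → ∀ ⦃w⦄, H.Adj v w → w ∈ S ∨ w ∈ u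

theorem ncard_add_two_le_of_isTutteViolator [Finite V]
    (heven : Even (Nat.card V)) {u : Set V}
    (hu : H.IsTutteViolator u) :
    u.ncard + 2 ≤ ((⊤ : H.Subgraph).deleteVerts u).coe.oddComponents.ncard := by
  have hverts : Nat.card ((⊤ : H.Subgraph).deleteVerts u).verts + u.ncard = Nat.card V := by
    rw [Subgraph.deleteVerts_verts, Subgraph.verts_top, ← Set.compl_eq_univ_sdiff,
      Nat.card_coe_set_eq, add_comm, Set.ncard_add_ncard_compl]
  have hparity := odd_ncard_oddComponents ((⊤ : H.Subgraph).deleteVerts u).coe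
  have hlt : u.ncard < ((⊤ : H.Subgraph).deleteVerts u).coe.oddComponents.ncard := hu
  grind

theorem even_card_interedges_self (S : Finset V) : Even #(H.interedges S S) := by
  rw [← ZMod.natCast_eq_zero_iff_even, card_eq_sum_ones, Nat.cast_sum]
  refine sum_involution (fun e _ => e.swap) (fun _ _ => by decide) (fun e he _ heq => ?_)
    (fun e he => ?_) (fun _ _ => Prod.swap_swap _)
  · exact (H.mem_interedges_iff.mp he).2.2.ne (congrArg Prod.snd heq)
  · rw [H.mem_interedges_iff] at he ⊢
    exact ⟨he.2.1, he.1, he.2.2.symm⟩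

theorem existsUnique_adj_of_card_interedges_eq_one (h : #(H.interedges S {c}) = 1) :
    ∃! v, v ∈ S ∧ H.Adj v c := by
  simp only [card_eq_one, Finset.ext_iff, mem_interedges_iff, mem_singleton, Prod.forall,
    Prod.exists, Prod.mk.injEq] at h
  obtain ⟨v, c', h⟩ := h
  obtain rfl : c' = c := ((h v c').mpr ⟨rfl, rfl⟩).2.1
  exact ⟨v, by simpa using h v c', fun w hw => ((h w c').mp ⟨hw.1, rfl, hw.2⟩).1⟩

theorem three_le_card_filter_lt {ι : Type*} {s : Finset ι} {f : ι → ℕ} {k : ℕ}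
    (hd : 0 < d) (hs : k + 2 ≤ #s) (hf : ∀ i ∈ s, 0 < f i) (hsum : ∑ i ∈ s, f i ≤ d * k) :
    3 ≤ #{i ∈ s | f i < d} := by
  have hsmall : #{i ∈ s | f i < d} ≤ ∑ i ∈ s with f i < d, f i := by
    rw [card_eq_sum_ones]
    exact sum_le_sum fun i hi => hf i (mem_filter.mp hi).1
  have hlarge : d * #{i ∈ s | ¬ f i < d} ≤ ∑ i ∈ s with ¬ f i < d, f i := by
    rw [mul_comm, ← smul_eq_mul]
    exact card_nsmul_le_sum _ _ _ fun i hi => not_lt.mp (mem_filter.mp hi).2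
  have hsplit := sum_filter_add_sum_filter_not s (f · < d) f
  have hcard := card_filter_add_card_filter_not (s := s) (f · < d)
  by_contra! hlt
  have hmul : d * (k + 2) ≤ d * (#{i ∈ s | f i < d} + #{i ∈ s | ¬ f i < d}) :=
    Nat.mul_le_mul_left d (by lia)
  interval_cases #{i ∈ s | f i < d} <;> lia

variable [Fintype V]

theorem isSeparatedBy_image_supp
    (K : ((⊤ : H.Subgraph).deleteVerts (u : Set V)).coe.ConnectedComponent) :
    IsSeparatedBy H (Subtype.val '' K.supp).toFinset u := by
  simp only [IsSeparatedBy, Finset.disjoint_left, Set.mem_toFinset]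
  constructor
  · rintro _ ⟨x, -, rfl⟩
    simpa using x.2
  · rintro _ ⟨x, hx, rfl⟩ w hxw
    refine or_iff_not_imp_right.mpr fun hw => ⟨⟨w, by simpa using hw⟩, ?_, rfl⟩
    refine (K.mem_supp_congr_adj ?_).mp hx
    have := x.2
    simp_all

theorem exists_odd_separated_family_of_no_isPerfectMatching (heven : Even (Fintype.card V))
    (hpm : ∀ M : H.Subgraph, ¬ M.IsPerfectMatching) :
    ∃ (u : Finset V) (𝒮 : Finset (Finset V)), #u + 2 ≤ #𝒮 ∧
      (𝒮 : Set (Finset V)).PairwiseDisjoint id ∧ ∀ S ∈ 𝒮, Odd #S ∧ IsSeparatedBy H S u := by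
  rw [← Nat.card_eq_fintype_card] at heven
  obtain ⟨U, hU⟩ := exists_isTutteViolator hpm heven
  lift U to Finset V using U.toFinite with u
  set T := ((⊤ : H.Subgraph).deleteVerts (u : Set V)).coe
  let vertexSet (K : T.ConnectedComponent) : Finset V := (Subtype.val '' K.supp).toFinset
  have vertexSet_disjoint : Pairwise (Disjoint on vertexSet) := fun K L hKL => by
    rw [Function.onFun, Set.disjoint_toFinset, Set.disjoint_image_iff Subtype.val_injective]
    exact pairwise_disjoint_supp_connectedComponent _ hKL
  have vertexSet_injective : vertexSet.Injective := fun K L hKL =>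
    ConnectedComponent.supp_injective
      (Subtype.val_injective.image_injective (Set.toFinset_inj.mp hKL))
  refine ⟨u, T.oddComponents.toFinset.image vertexSet, ?_, ?_, ?_⟩
  · rw [card_image_of_injective _ vertexSet_injective, ← Set.ncard_eq_toFinset_card',
      ← Set.ncard_coe_finset]
    exact ncard_add_two_le_of_isTutteViolator heven hU
  · intro A hA B hB hAB
    obtain ⟨K, -, rfl⟩ := mem_image.mp hA
    obtain ⟨L, -, rfl⟩ := mem_image.mp hB
    exact vertexSet_disjoint (ne_of_apply_ne _ hAB)
  · intro A hA
    obtain ⟨K, hK, rfl⟩ := mem_image.mp hA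
    refine ⟨?_, isSeparatedBy_image_supp K⟩
    rw [← Set.ncard_eq_toFinset_card', Set.ncard_image_of_injective _ Subtype.val_injective]
    simpa using hK

theorem card_interedges_univ (hH : H.IsRegularOfDegree d) (S : Finset V) :
    #(H.interedges S univ) = d * #S := by
  rw [interedges_def, card_filter, sum_product]
  simp_rw [← card_filter, ← neighborFinset_eq_filter, card_neighborFinset_eq_degree, hH.degree_eq,
    sum_const, smul_eq_mul, mul_comm]

theorem IsSeparatedBy.card_interedges_add (hH : H.IsRegularOfDegree d) (hS : IsSeparatedBy H S u) :
    #(H.interedges S S) + #(H.interedges S u) = d * #S := by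
  rw [← card_interedges_univ hH, ← card_union_of_disjoint (interedges_disjoint_right _ _ hS.1)]
  congr 1
  ext ⟨v, w⟩
  have := @hS.2 v
  simp only [mem_union, mk_mem_interedges_iff, mem_univ, true_and]
  grind

theorem IsSeparatedBy.odd_card_interedges (hd : Odd d) (hH : H.IsRegularOfDegree d)
    (hodd : Odd #S) (hS : IsSeparatedBy H S u) : Odd #(H.interedges S u) := by
  have hsum : Odd (#(H.interedges S S) + #(H.interedges S u)) := by
    rw [hS.card_interedges_add hH]
    exact hd.mul hodd
  exact (Nat.odd_add'.mp hsum).mpr (even_card_interedges_self S)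

theorem IsSeparatedBy.degree_add_two_le_card (hd : Odd d) (hH : H.IsRegularOfDegree d)
    (hodd : Odd #S) (hS : IsSeparatedBy H S u) (hcut : #(H.interedges S u) < d) :
    d + 2 ≤ #S := by
  have hinside : #(H.interedges S S) + #S ≤ #S * #S := by
    rw [← card_product, ← diag_union_offDiag, card_union_of_disjoint (disjoint_diag_offDiag S),
      diag_card, add_comm]
    refine Nat.add_le_add_left (card_le_card fun e he => ?_) _
    rw [H.mem_interedges_iff] at he
    exact mem_offDiag.mpr ⟨he.1, he.2.1, he.2.2.ne⟩
  have hsum := hS.card_interedges_add hH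
  by_contra! hlt
  have hle : #S ≤ d := by grind
  obtain ⟨k, rfl⟩ := Nat.exists_eq_add_of_le hle
  obtain ⟨m, hm⟩ := hodd
  nlinarith

theorem sum_card_interedges_le (hH : H.IsRegularOfDegree d) (u : Finset V)
    {𝒮 : Finset (Finset V)} (hdisj : (𝒮 : Set (Finset V)).PairwiseDisjoint id) :
    ∑ S ∈ 𝒮, #(H.interedges S u) ≤ d * #u := by
  calc ∑ S ∈ 𝒮, #(H.interedges S u)
      = #(H.interedges (𝒮.biUnion id) u) := by
        rw [interedges_biUnion_left, card_biUnion]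
        · rfl
        · exact fun A hA B hB hAB => interedges_disjoint_left _ (hdisj hA hB hAB) _
    _ ≤ #(H.interedges univ u) := card_le_card (interedges_mono _ (subset_univ _) subset_rfl)
    _ = #(H.interedges u univ) :=
        have := H.symm
        Rel.card_interedges_comm _ _
    _ = d * #u := card_interedges_univ hH u

theorem even_card_of_isRegularOfDegree (hd : Odd d) (hH : H.IsRegularOfDegree d) :
    Even (Fintype.card V) := by
  simpa [hH.degree_eq, hd] using H.even_card_odd_degree_vertices

theorem sum_card_add_card_le_card {𝒮 : Finset (Finset V)}
    (hdisj : (𝒮 : Set (Finset V)).PairwiseDisjoint id) (hu : ∀ S ∈ 𝒮, Disjoint S u) :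
    ∑ S ∈ 𝒮, #S + #u ≤ Fintype.card V := by
  calc ∑ S ∈ 𝒮, #S + #u
      = #(𝒮.biUnion id ∪ u) := by
        rw [card_union_of_disjoint ((disjoint_biUnion_left 𝒮 id u).mpr hu), card_biUnion hdisj]
        rfl
    _ ≤ Fintype.card V := card_le_univ _

theorem exists_three_separated_of_no_isPerfectMatching (hd : Odd d) (hH : H.IsRegularOfDegree d)
    (hpm : ∀ M : H.Subgraph, ¬ M.IsPerfectMatching) (hcard : Fintype.card V ≤ 3 * d + 7) :
    ∃ (c : V) (𝒯 : Finset (Finset V)), #𝒯 = 3 ∧ (𝒯 : Set (Finset V)).PairwiseDisjoint id ∧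
      ∀ S ∈ 𝒯, #S = d + 2 ∧ IsSeparatedBy H S {c} := by
  obtain ⟨u, 𝒮, hu𝒮, hdisj, h𝒮⟩ := exists_odd_separated_family_of_no_isPerfectMatching
    (even_card_of_isRegularOfDegree hd hH) hpm
  have hcut : ∀ S ∈ 𝒮, 0 < #(H.interedges S u) := fun S hS =>
    ((h𝒮 S hS).2.odd_card_interedges hd hH (h𝒮 S hS).1).pos
  have hcut_sum := sum_card_interedges_le hH u hdisj
  obtain ⟨𝒯, h𝒯, h𝒯card⟩ := exists_subset_card_eq
    (three_le_card_filter_lt hd.pos hu𝒮 hcut hcut_sum)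
  simp only [subset_iff, mem_filter] at h𝒯
  have h𝒯disj : (𝒯 : Set (Finset V)).PairwiseDisjoint id := hdisj.subset fun S hS => (h𝒯 hS).1
  have hsize : ∀ S ∈ 𝒯, d + 2 ≤ #S := fun S hS =>
    (h𝒮 S (h𝒯 hS).1).2.degree_add_two_le_card hd hH (h𝒮 S (h𝒯 hS).1).1 (h𝒯 hS).2
  have hu_pos : 0 < #u := by
    have := sum_pos hcut (card_pos.mp (by lia))
    exact Nat.pos_of_mul_pos_left (this.trans_le hcut_sum)
  have htotal : ∑ S ∈ 𝒯, #S + #u ≤ 3 * d + 7 :=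
    (sum_card_add_card_le_card h𝒯disj fun S hS => (h𝒮 S (h𝒯 hS).1).2.1).trans hcard
  have hsizes : ∑ S ∈ 𝒯, (d + 2) = 3 * (d + 2) := by simp [h𝒯card]
  have hsizes_le := sum_le_sum hsize
  obtain ⟨c, rfl⟩ := card_eq_one.mp (show #u = 1 by lia)
  refine ⟨c, 𝒯, h𝒯card, h𝒯disj, fun S hS => ⟨?_, (h𝒮 S (h𝒯 hS).1).2⟩⟩
  exact ((sum_eq_sum_iff_of_le hsize).mp (by lia) S hS).symm

theorem exists_three_blocks_of_no_isPerfectMatching (hH : H.IsRegularOfDegree 3)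
    (hpm : ∀ M : H.Subgraph, ¬ M.IsPerfectMatching) (hcard : Fintype.card V ≤ 16) :
    ∃ (c : V) (S : Fin 3 → Finset V), Pairwise (Disjoint on S) ∧
      ∀ i, #(S i) = 5 ∧ IsSeparatedBy H (S i) {c} ∧ #(H.interedges (S i) {c}) = 1 := by
  have hodd : Odd 3 := by decide
  obtain ⟨c, 𝒯, h𝒯card, hdisj, h𝒯⟩ :=
    exists_three_separated_of_no_isPerfectMatching hodd hH hpm hcard
  have hpos : ∀ S ∈ 𝒯, 1 ≤ #(H.interedges S {c}) := fun S hS =>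
    ((h𝒯 S hS).2.odd_card_interedges hodd hH (by rw [(h𝒯 S hS).1]; decide)).pos
  have hsum : ∑ S ∈ 𝒯, 1 = ∑ S ∈ 𝒯, #(H.interedges S {c}) := by
    refine le_antisymm (sum_le_sum hpos) ?_
    simpa [h𝒯card] using sum_card_interedges_le hH {c} hdisj
  have hone := (sum_eq_sum_iff_of_le hpos).mp hsum
  let e : Fin 3 ≃ 𝒯 := (𝒯.equivFinOfCardEq h𝒯card).symm
  refine ⟨c, fun i => e i, fun i j hij => ?_, fun i => ?_⟩
  · exact hdisj (e i).2 (e j).2 (Subtype.val_injective.ne (e.injective.ne hij))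
  · exact ⟨(h𝒯 _ (e i).2).1, (h𝒯 _ (e i).2).2, (hone _ (e i).2).symm⟩

theorem neighborFinset_eq_erase {v : V} (hv : v ∈ S) (hN : H.neighborFinset v ⊆ S)
    (hcard : #S ≤ H.degree v + 1) : H.neighborFinset v = S.erase v := by
  refine eq_of_subset_of_card_le (subset_erase.mpr ⟨hN, H.notMem_neighborFinset_self v⟩) ?_
  rwa [card_erase_of_mem hv, card_neighborFinset_eq_degree, Nat.sub_le_iff_le_add]

theorem exists_root_neighborFinset_eq (hH : H.IsRegularOfDegree 3) (hcard : #S = 5)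
    (hS : IsSeparatedBy H S {c}) (hone : #(H.interedges S {c}) = 1) :
    ∃ v₁ v₂ v₃ v₄ v₅ : V, S = {v₁, v₂, v₃, v₄, v₅} ∧ H.neighborFinset v₅ = {c, v₃, v₄} ∧
      ∀ v ∈ S.erase v₅, H.neighborFinset v ⊆ S := by
  have hout : ∀ v ∈ S, ∀ w, H.Adj v w → w ∈ S ∨ w = c := by simpa using hS.2
  obtain ⟨v₅, ⟨hv₅S, hv₅c⟩, hroot⟩ := existsUnique_adj_of_card_interedges_eq_one hone
  obtain ⟨v₃, v₄, hv₃₄, hN₅⟩ : ∃ v₃ v₄, v₃ ≠ v₄ ∧ (H.neighborFinset v₅).erase c = {v₃, v₄} := by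
    rw [← card_eq_two, card_erase_of_mem (by simpa using hv₅c), card_neighborFinset_eq_degree,
      hH.degree_eq]
  have hmem : ∀ w ∈ ({v₃, v₄} : Finset V), w ∈ S ∧ w ≠ v₅ := fun w hw => by
    obtain ⟨hwc, hw⟩ := mem_erase.mp (hN₅ ▸ hw)
    rw [mem_neighborFinset] at hw
    exact ⟨(hout v₅ hv₅S w hw).resolve_right hwc, hw.ne'⟩
  have hsub : {v₅, v₃, v₄} ⊆ S := by grind
  obtain ⟨v₁, v₂, -, hv₁₂⟩ := card_eq_two.mp (show #(S \ {v₅, v₃, v₄}) = 2 by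
    rw [card_sdiff_of_subset hsub, hcard, card_eq_three.mpr ⟨v₅, v₃, v₄, by grind⟩])
  refine ⟨v₁, v₂, v₃, v₄, v₅, ?_, ?_, fun v hv w hw => ?_⟩
  · rw [← sdiff_union_of_subset hsub, hv₁₂]
    grind
  · rw [← hN₅, insert_erase (by simpa using hv₅c)]
  · obtain ⟨hvv₅, hvS⟩ := mem_erase.mp hv
    rw [mem_neighborFinset] at hw
    exact (hout v hvS w hw).resolve_right fun hwc => hvv₅ (hroot v ⟨hvS, hwc ▸ hw⟩)

theorem exists_endBlock_labelling (hH : H.IsRegularOfDegree 3) (hcard : #S = 5)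
    (hS : IsSeparatedBy H S {c}) (hone : #(H.interedges S {c}) = 1) :
    ∃ v₁ v₂ v₃ v₄ v₅ : V, S = {v₁, v₂, v₃, v₄, v₅} ∧ [v₁, v₂, v₃, v₄, v₅].Nodup ∧
      H.neighborFinset v₁ = {v₂, v₃, v₄} ∧ H.neighborFinset v₂ = {v₁, v₃, v₄} ∧
      H.neighborFinset v₃ = {v₁, v₂, v₅} ∧ H.neighborFinset v₄ = {v₁, v₂, v₅} ∧
      H.neighborFinset v₅ = {c, v₃, v₄} := by
  obtain ⟨v₁, v₂, v₃, v₄, v₅, rfl, hN₅, hinside⟩ := exists_root_neighborFinset_eq hH hcard hS hone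
  have hcS := disjoint_singleton_right.mp hS.1
  have hnodup : [v₁, v₂, v₃, v₄, v₅].Nodup := by
    rw [← Multiset.coe_nodup, ← Multiset.toFinset_card_eq_card_iff_nodup]
    simpa using hcard
  have hne := hnodup
  simp only [List.nodup_cons, List.mem_cons, List.not_mem_nil, or_false, not_or] at hne
  have hadj (v w : V) : w ∈ H.neighborFinset v ↔ v ∈ H.neighborFinset w := by
    simp only [mem_neighborFinset, H.adj_comm]
  have hN : ∀ v ∈ ({v₁, v₂} : Finset V),
      H.neighborFinset v = ({v₁, v₂, v₃, v₄} : Finset V).erase v := fun v hv => by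
    have hv₅ : v₅ ∉ H.neighborFinset v := by
      rw [hadj, hN₅]
      grind
    have := hinside v (by grind)
    exact neighborFinset_eq_erase (by grind) (by grind) (by simpa [hH.degree_eq] using card_le_four)
  have hN₁ : H.neighborFinset v₁ = {v₂, v₃, v₄} := by grind
  have hN₂ : H.neighborFinset v₂ = {v₁, v₃, v₄} := by grind
  have hN' : ∀ v ∈ ({v₃, v₄} : Finset V), H.neighborFinset v = {v₁, v₂, v₅} := fun v hv => by
    refine (eq_of_subset_of_card_le (fun w hw => ?_) ?_).symm
    · rw [hadj]
      grind
    · rw [card_neighborFinset_eq_degree, hH.degree_eq, card_eq_three.mpr ⟨v₁, v₂, v₅, by grind⟩]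
  exact ⟨v₁, v₂, v₃, v₄, v₅, rfl, hnodup, hN₁, hN₂, hN' v₃ (by simp), hN' v₄ (by simp), hN₅⟩

/-- The end-block of `S₁₆`, with the vertices `v₁`, …, `v₅` numbered from `0`. -/
def endBlock : SimpleGraph (Fin 5) :=
  fromEdgeSet ({s(0, 1), s(0, 2), s(0, 3), s(1, 2), s(1, 3), s(2, 4), s(3, 4)} :
    Finset (Sym2 (Fin 5)))

theorem exists_endBlock_embedding (hH : H.IsRegularOfDegree 3) (hcard : #S = 5)
    (hS : IsSeparatedBy H S {c}) (hone : #(H.interedges S {c}) = 1) :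
    ∃ g : endBlock ↪g H, (∀ a, g a ∈ S) ∧ ∀ a, H.Adj c (g a) ↔ a = 4 := by
  obtain ⟨v₁, v₂, v₃, v₄, v₅, rfl, hnodup, hN₁, hN₂, hN₃, hN₄, hN₅⟩ :=
    exists_endBlock_labelling hH hcard hS hone
  have hc := disjoint_singleton_right.mp hS.1
  simp only [Finset.ext_iff, mem_neighborFinset, mem_insert, mem_singleton] at hN₁ hN₂ hN₃ hN₄ hN₅
  simp only [List.nodup_cons, List.mem_cons, List.not_mem_nil, or_false, not_or] at hnodup
  have hadj (a b : Fin 5) : H.Adj (![v₁, v₂, v₃, v₄, v₅] a) (![v₁, v₂, v₃, v₄, v₅] b) ↔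
      endBlock.Adj a b := by
    fin_cases a <;> fin_cases b <;> simp [endBlock, *] <;> grind
  have hinj : Function.Injective ![v₁, v₂, v₃, v₄, v₅] :=
    List.nodup_ofFn.mp (by simpa using hnodup)
  refine ⟨⟨⟨_, hinj⟩, hadj _ _⟩, fun a => ?_, fun a => ?_⟩
  · fin_cases a <;> simp
  · fin_cases a <;> simp [H.adj_comm c, *] <;> grind

/-- Disjoint copies of `B`, one for each element of `ι`, together with a new vertex `none` joined
to the root `r` of every copy. -/
def starOfCopies (ι : Type*) {β : Type*} (B : SimpleGraph β) (r : β) :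
    SimpleGraph (Option (ι × β)) where
  Adj
    | none, none => False
    | none, some p => p.2 = r
    | some p, none => p.2 = r
    | some p, some q => p.1 = q.1 ∧ B.Adj p.2 q.2
  symm := ⟨by rintro (_ | p) (_ | q) <;> simp +contextual [eq_comm, B.adj_comm]⟩
  loopless := ⟨by rintro (_ | p) <;> simp⟩

theorem nonempty_starOfCopies_iso {ι β : Type*} [Fintype ι] [Fintype β] {B : SimpleGraph β} {r : β}
    {S : ι → Finset V} (hdisj : Pairwise (Disjoint on S)) (hS : ∀ i, IsSeparatedBy H (S i) {c})
    (g : ι → B ↪g H) (hgS : ∀ i b, g i b ∈ S i) (hgc : ∀ i b, H.Adj c (g i b) ↔ b = r)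
    (hcard : Fintype.card V ≤ Fintype.card ι * Fintype.card β + 1) :
    Nonempty (starOfCopies ι B r ≃g H) := by
  have hcS (i : ι) : c ∉ S i := disjoint_singleton_right.mp (hS i).1
  have hindex {i j : ι} {v : V} (hi : v ∈ S i) (hj : v ∈ S j) : i = j := by
    by_contra hij
    exact Finset.disjoint_left.mp (hdisj hij) hi hj
  let f : Option (ι × β) → V := fun o => o.elim c fun p => g p.1 p.2
  have hinj : f.Injective := by
    rintro (_ | ⟨i, a⟩) (_ | ⟨j, b⟩) h
    · rfl
    · change c = g j b at h
      exact (hcS j (h ▸ hgS j b)).elim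
    · change g i a = c at h
      exact (hcS i (h ▸ hgS i a)).elim
    · change g i a = g j b at h
      obtain rfl := hindex (hgS i a) (h ▸ hgS j b)
      rw [(g i).injective h]
  have hbij : f.Bijective := hinj.bijective_of_nat_card_le (by simpa using hcard)
  refine ⟨⟨Equiv.ofBijective f hbij, ?_⟩⟩
  rintro (_ | ⟨i, a⟩) (_ | ⟨j, b⟩)
  · simp [f, starOfCopies]
  · exact hgc j b
  · exact (H.adj_comm _ _).trans (hgc i a)
  · change H.Adj (g i a) (g j b) ↔ i = j ∧ B.Adj a b
    constructor
    · intro h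
      have hj : g j b ∈ S i := ((hS i).2 (hgS i a) h).resolve_right fun hbc =>
        hcS j (mem_singleton.mp hbc ▸ hgS j b)
      obtain rfl := hindex hj (hgS j b)
      exact ⟨rfl, (g i).map_adj_iff.mp h⟩
    · rintro ⟨rfl, h⟩
      exact (g i).map_adj_iff.mpr h

end Blocks

namespace Multigraph

variable {G H : Multigraph}

/-- The simple graph underlying a multigraph, forgetting loops and the multiplicity of edges. -/
def toSimpleGraph (G : Multigraph) : SimpleGraph G.V :=
  SimpleGraph.fromEdgeSet (Set.range G.ends)

theorem Simple.edgeSet_toSimpleGraph (hG : G.Simple) :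
    G.toSimpleGraph.edgeSet = Set.range G.ends := by
  rw [toSimpleGraph, SimpleGraph.edgeSet_fromEdgeSet, sdiff_eq_left, Set.disjoint_left]
  rintro _ ⟨e, rfl⟩
  exact hG.1 e

theorem Simple.toSimpleGraph_adj (hG : G.Simple) {a b : G.V} :
    G.toSimpleGraph.Adj a b ↔ s(a, b) ∈ Set.range G.ends := by
  rw [← hG.edgeSet_toSimpleGraph, SimpleGraph.mem_edgeSet]

theorem Loopless.degree_eq_card_star (hG : G.Loopless) (v : G.V) :
    G.degree v = (G.star v).card := by
  rw [degree, star, Finset.card_filter]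
  refine Finset.sum_congr rfl fun e _ => ?_
  have hne : G.ends e ≠ Sym2.diag v := fun h => hG e (h ▸ Sym2.diag_isDiag v)
  rw [incCount, if_neg hne]

theorem Simple.degree_toSimpleGraph (hG : G.Simple) (v : G.V) :
    G.toSimpleGraph.degree v = G.degree v := by
  rw [hG.1.degree_eq_card_star, ← Finset.card_image_of_injective (G.star v) hG.2,
    ← SimpleGraph.card_incidenceFinset_eq_degree]
  congr 1
  ext p
  simp only [SimpleGraph.mem_incidenceFinset, SimpleGraph.incidenceSet, hG.edgeSet_toSimpleGraph,
    star, Finset.mem_image, Finset.mem_filter]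
  grind

theorem Cubic.isRegularOfDegree_toSimpleGraph (hG : G.Cubic) (hs : G.Simple) :
    G.toSimpleGraph.IsRegularOfDegree 3 :=
  fun v => (hs.degree_toSimpleGraph v).trans (hG.2 v)

theorem Simple.isPerfectMatching_of_toSimpleGraph (hG : G.Simple) {M : G.toSimpleGraph.Subgraph}
    (hM : M.IsPerfectMatching) : G.IsPerfectMatching (G.ends ⁻¹' M.edgeSet) := by
  rw [SimpleGraph.Subgraph.isPerfectMatching_iff] at hM
  refine ⟨fun e he e' he' hne => ?_, fun v => ?_⟩
  · rintro ⟨v, hv, hv'⟩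
    obtain ⟨w, hw⟩ := Sym2.mem_iff_exists.mp hv
    obtain ⟨w', hw'⟩ := Sym2.mem_iff_exists.mp hv'
    rw [Set.mem_preimage, hw, SimpleGraph.Subgraph.mem_edgeSet] at he
    rw [Set.mem_preimage, hw', SimpleGraph.Subgraph.mem_edgeSet] at he'
    exact hne (hG.2 e e' (by rw [hw, hw', (hM v).unique he he']))
  · obtain ⟨w, hw, -⟩ := hM v
    obtain ⟨e, he⟩ := hG.toSimpleGraph_adj.mp hw.adj_sub
    exact ⟨e, by rwa [Set.mem_preimage, he], by simp [he]⟩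

/-- The edges of a simple multigraph correspond to those of its underlying simple graph. -/
noncomputable def Simple.edgeEquiv (hG : G.Simple) : G.E ≃ G.toSimpleGraph.edgeSet :=
  (Equiv.ofInjective G.ends hG.2).trans (Equiv.setCongr hG.edgeSet_toSimpleGraph.symm)

theorem Simple.isIsomorphicTo_of_iso (hG : G.Simple) (hH : H.Simple)
    (φ : G.toSimpleGraph ≃g H.toSimpleGraph) : G.IsIsomorphicTo H := by
  refine ⟨⟨φ.toEquiv, (hG.edgeEquiv.trans φ.mapEdgeSet).trans hH.edgeEquiv.symm, fun e => ?_⟩⟩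
  have hends (e' : H.E) : H.ends e' = hH.edgeEquiv e' := rfl
  rw [hends, Equiv.trans_apply, Equiv.apply_symm_apply]
  rfl

end Multigraph

theorem simple_sylvester16 : Sylvester16.Simple := by
  refine ⟨?_, fun _ _ => Subtype.ext⟩
  rintro ⟨p, hp⟩
  change ¬ p.IsDiag
  revert p
  simp

theorem nonempty_starOfCopies_iso_sylvester16 :
    Nonempty (starOfCopies (Fin 3) endBlock 4 ≃g Sylvester16.toSimpleGraph) := by
  let φ : Option (Fin 3 × Fin 5) ≃ Fin 16 :=
    (Equiv.optionCongr finProdFinEquiv).trans (finSuccEquiv 15).symm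
  have mem_range_val (s : Finset (Sym2 (Fin 16))) (p : Sym2 (Fin 16)) :
      p ∈ Set.range (Subtype.val : {q // q ∈ s} → Sym2 (Fin 16)) ↔ p ∈ s := by
    simp
  refine ⟨φ, fun {o o'} => (simple_sylvester16.toSimpleGraph_adj.trans
    (mem_range_val _ s(φ o, φ o'))).trans ?_⟩
  rcases o with _ | ⟨i, a⟩ <;> rcases o' with _ | ⟨j, b⟩ <;>
    simp only [φ, starOfCopies, endBlock, SimpleGraph.fromEdgeSet_adj, Finset.mem_coe]
  · decide
  · revert j b
    decide
  · revert i a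
    decide
  · revert i a j b
    decide

/-- a simple cubic graph with no perfect matching and at most 16
vertices is the Sylvester graph S₁₆. -/
theorem no_perfect_matching_le_sixteen_is_sylvester16 (G : Multigraph)
    (hs : G.Simple) (hc : G.Cubic)
    (hpm : ¬ ∃ M : Set G.E, G.IsPerfectMatching M)
    (hcard : Fintype.card G.V ≤ 16) :
    Multigraph.IsIsomorphicTo G Sylvester16 := by
  have hreg := hc.isRegularOfDegree_toSimpleGraph hs
  obtain ⟨c, S, hdisj, hS⟩ := exists_three_blocks_of_no_isPerfectMatching hreg
    (fun _ hM => hpm ⟨_, hs.isPerfectMatching_of_toSimpleGraph hM⟩) hcard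
  choose g hgS hgc using fun i => exists_endBlock_embedding hreg (hS i).1 (hS i).2.1 (hS i).2.2
  obtain ⟨φ⟩ := nonempty_starOfCopies_iso hdisj (fun i => (hS i).2.1) g hgS hgc (by simpa)
  obtain ⟨ψ⟩ := nonempty_starOfCopies_iso_sylvester16
  exact hs.isIsomorphicTo_of_iso simple_sylvester16 (φ.symm.trans ψ)
end

section
/- The Petersen graph does not admit an S'-coloring in which every edge of S' is used, where S' is the non-3-edge-colorable simple cubic graph on 10 vertices containing a bridge. -/
open scoped Classical

/-!
Both graphs have fifteen edges and ten vertices, so a coloring of the Petersen graph using every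
edge of `S'` is a bijection of edges. Send each vertex `x` of the Petersen graph to a vertex of `S'`
whose star is the image of the star of `x`: distinct vertices of the Petersen graph have distinct
stars, so this map is injective, hence a bijection of vertices. The two bijections preserve
incidence, so they form an isomorphism; but the Petersen graph is triangle-free and `S'` is not.
-/

namespace Multigraph

variable {G H : Multigraph}

@[simp]
theorem mem_star {v : G.V} {e : G.E} : e ∈ G.star v ↔ v ∈ G.ends e := by
  simp [star]

theorem star_injective_of_ends_injective (hends : Function.Injective G.ends)
    (hcard : ∀ v, 1 < (G.star v).card) :
    Function.Injective G.star := by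
  intro x y hxy
  by_contra hne
  obtain ⟨e, he, e', he', hee'⟩ := Finset.one_lt_card.1 (hcard x)
  have ends_eq {d : G.E} (hd : d ∈ G.star x) : G.ends d = s(x, y) :=
    (Sym2.mem_and_mem_iff hne).1 ⟨mem_star.1 hd, mem_star.1 (hxy ▸ hd)⟩
  exact hee' (hends ((ends_eq he).trans (ends_eq he').symm))

theorem Iso.isTriangle_iff (φ : Iso G H) {e₁ e₂ e₃ : G.E} {u v w : G.V} :
    H.IsTriangle (φ.eEquiv e₁) (φ.eEquiv e₂) (φ.eEquiv e₃) (φ.vEquiv u) (φ.vEquiv v) (φ.vEquiv w) ↔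
      G.IsTriangle e₁ e₂ e₃ u v w := by
  simp only [IsTriangle, φ.ends_map, ← Sym2.map_mk, (Sym2.map.injective φ.vEquiv.injective).eq_iff,
    φ.vEquiv.injective.ne_iff]

theorem Iso.triangleFree_iff (φ : Iso G H) : H.TriangleFree ↔ G.TriangleFree := by
  simp only [TriangleFree, φ.eEquiv.surjective.exists, φ.vEquiv.surjective.exists, φ.isTriangle_iff]

theorem ends_eq_map_of_image_star_eq {f : G.E → H.E} {g : G.V → H.V} (hf : Function.Injective f)
    (hg : Function.Bijective g) (hfg : ∀ x, (G.star x).image f = H.star (g x)) (e : G.E) :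
    H.ends (f e) = (G.ends e).map g := by
  refine Sym2.ext fun y => ?_
  obtain ⟨x, rfl⟩ := hg.surjective y
  calc g x ∈ H.ends (f e)
    _ ↔ f e ∈ (G.star x).image f := by rw [hfg, mem_star]
    _ ↔ x ∈ G.ends e := by rw [hf.mem_finset_image, mem_star]
    _ ↔ g x ∈ (G.ends e).map g := by simp only [Sym2.mem_map, hg.injective.eq_iff, exists_eq_right]

theorem IsHColoring.isIsomorphicTo_of_surjective {f : G.E → H.E} (hcol : IsHColoring G H f)
    (hf : Function.Surjective f) (hstar : Function.Injective G.star)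
    (hE : Fintype.card G.E ≤ Fintype.card H.E) (hV : Fintype.card H.V ≤ Fintype.card G.V) :
    G.IsIsomorphicTo H := by
  choose g hfg using hcol
  have hf_bij : Function.Bijective f :=
    hf.bijective_of_nat_card_le (by simpa only [Nat.card_eq_fintype_card] using hE)
  have hg_inj : Function.Injective g := fun x y hxy =>
    hstar (Finset.image_injective hf_bij.injective (by simp only [hfg, hxy]))
  have hg_bij : Function.Bijective g :=
    hg_inj.bijective_of_nat_card_le (by simpa only [Nat.card_eq_fintype_card] using hV)
  exact ⟨⟨.ofBijective g hg_bij, .ofBijective f hf_bij,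
    ends_eq_map_of_image_star_eq hf_bij.injective hg_bij hfg⟩⟩

end Multigraph

theorem card_edges_petersen : Fintype.card Petersen.E = 15 := by decide +kernel

theorem card_edges_sprime : Fintype.card Sprime.E = 15 := by decide +kernel

theorem ends_injective_petersen : Function.Injective Petersen.ends := Subtype.val_injective

theorem one_lt_card_star_petersen (v : Petersen.V) : 1 < (Petersen.star v).card := by
  revert v; decide +kernel

theorem star_injective_petersen : Function.Injective Petersen.star :=
  Multigraph.star_injective_of_ends_injective ends_injective_petersen one_lt_card_star_petersen

theorem triangleFree_petersen : Petersen.TriangleFree := by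
  have no_triangle : ∀ u v w : Petersen.V, ¬ ((∃ e, Petersen.ends e = s(u, v)) ∧
      (∃ e, Petersen.ends e = s(v, w)) ∧ ∃ e, Petersen.ends e = s(u, w)) := by
    decide +kernel
  rintro ⟨e₁, e₂, e₃, u, v, w, -, -, -, h₁, h₂, h₃⟩
  exact no_triangle u v w ⟨⟨e₁, h₁⟩, ⟨e₂, h₂⟩, ⟨e₃, h₃⟩⟩

theorem not_triangleFree_sprime : ¬ Sprime.TriangleFree := fun h =>
  h ⟨⟨s(0, 1), by decide⟩, ⟨s(1, 2), by decide⟩, ⟨s(0, 2), by decide⟩,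
    (0 : Fin 10), (1 : Fin 10), (2 : Fin 10),
    (by decide : (0 : Fin 10) ≠ 1), (by decide : (1 : Fin 10) ≠ 2), (by decide : (0 : Fin 10) ≠ 2),
    rfl, rfl, rfl⟩

/-- the Petersen graph admits no S'-coloring in which every edge
of S' is used. -/
theorem petersen_admits_no_surjective_sprime_coloring :
    ¬ ∃ f : Petersen.E → Sprime.E,
      Multigraph.IsHColoring Petersen Sprime f ∧
      ∀ e : Sprime.E, ∃ e' : Petersen.E, f e' = e := by
  rintro ⟨f, hcol, hf⟩
  obtain ⟨φ⟩ : Petersen.IsIsomorphicTo Sprime :=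
    hcol.isIsomorphicTo_of_surjective hf star_injective_petersen
      (card_edges_petersen.trans card_edges_sprime.symm).le le_rfl
  exact not_triangleFree_sprime (φ.triangleFree_iff.2 triangleFree_petersen)
end
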